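/- arXiv:2208.10158 — 3 statements merged into one kernel-verified Lean document; each statement's English description precedes it below -/
import Mathlib

section
/- Let (Ω, 𝒜, ℙ) be a probability space, d* ≥ 1 a natural number, q ∈ ℝ, 0 < α < 1, and for each T ∈ ℕ and each natural number d ≥ 1 let T̂_{T,d} be a real random variable. Assume: (a) for every d with 1 ≤ d < d* and every C ∈ ℝ, ℙ(T̂_{T,d} > C) → 0 as T → ∞; (b) either for every C ∈ ℝ one has ℙ(T̂_{T,d*} ≤ C) → 0, or T̂_{T,d*} converges in distribution to a Borel probability measure μ on ℝ with μ({q}) = 0 and μ((−∞, q]) = α. Define the estimator d̂_T as the least d ≥ 1 with T̂_{T,d} > q, with the convention d̂_T = +∞ (an element of ℕ ∪ {∞}) if no such d exists. Then lim_{T→∞} ℙ(d̂_T < d*) = 0 and limsup_{T→∞} ℙ(d̂_T > d*) ≤ α. -/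
/-!
Both claims are event inclusions. If `d̂_T < d*`, then `T̂_{T,d} > q` for some `1 ≤ d < d*`, so the
probability is bounded by a finite sum of terms tending to `0`. If `d̂_T > d*`, then `d*` itself is
not a candidate, so `T̂_{T,d*} ≤ q`; the probability of this event tends to `0` in the first case
of the alternative and to `μ (Iic q) = α` in the second, since `q` is a continuity point of `μ`.
-/

open MeasureTheory Filter Topology

/-- Theorem 4.3 of the paper: consistency of the estimator
`d̂_T = min {d ≥ 1 : T̂_{T,d} > q}` (with the convention `d̂_T = ∞` if no such `d`
exists) of the minimal model complexity `d*`: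
`ℙ(d̂_T < d*) → 0` and `limsup_T ℙ(d̂_T > d*) ≤ α`. -/
theorem complexity_estimator_consistency
    {Ω : Type*} [MeasurableSpace Ω] (P : Measure Ω) [IsProbabilityMeasure P]
    (dstar : ℕ) (hdstar : 1 ≤ dstar) (q α : ℝ) (hα0 : 0 < α) (hα1 : α < 1)
    (That : ℕ → ℕ → Ω → ℝ)
    (ha : ∀ d : ℕ, 1 ≤ d → d < dstar → ∀ C : ℝ,
      Tendsto (fun T => P {ω | C < That T d ω}) atTop (𝓝 0))
    (hb : (∀ C : ℝ, Tendsto (fun T => P {ω | That T dstar ω ≤ C}) atTop (𝓝 0)) ∨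
      (∃ μ : Measure ℝ, IsProbabilityMeasure μ ∧ μ {q} = 0 ∧
        μ (Set.Iic q) = ENNReal.ofReal α ∧
        ∀ t : ℝ, μ {t} = 0 →
          Tendsto (fun T => P {ω | That T dstar ω ≤ t}) atTop (𝓝 (μ (Set.Iic t))))) :
    Tendsto
      (fun T => P {ω |
        sInf {m : ℕ∞ | ∃ d : ℕ, m = (d : ℕ∞) ∧ 1 ≤ d ∧ q < That T d ω} < (dstar : ℕ∞)})
      atTop (𝓝 0) ∧
    Filter.limsup
      (fun T => P {ω |
        (dstar : ℕ∞) < sInf {m : ℕ∞ | ∃ d : ℕ, m = (d : ℕ∞) ∧ 1 ≤ d ∧ q < That T d ω}})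
      atTop ≤ ENNReal.ofReal α := by
  constructor
  · -- `d̂_T < d*` forces one of the finitely many statistics below `d*` to exceed `q`: union bound.
    have hsum : Tendsto (fun T => ∑ d ∈ Finset.Ico 1 dstar, P {ω | q < That T d ω})
        atTop (𝓝 0) := by
      have h := tendsto_finsetSum (Finset.Ico 1 dstar) fun d hd =>
        ha d (Finset.mem_Ico.1 hd).1 (Finset.mem_Ico.1 hd).2 q
      simpa using h
    refine tendsto_of_tendsto_of_tendsto_of_le_of_le tendsto_const_nhds hsum
      (fun _ => zero_le) fun T => ?_
    refine le_trans (measure_mono fun ω hω => ?_)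
      (measure_biUnion_finset_le (Finset.Ico 1 dstar) fun d => {ω | q < That T d ω})
    obtain ⟨m, ⟨d, rfl, hd1, hdq⟩, hlt⟩ := sInf_lt_iff.1 (Set.mem_ofPred_eq ▸ hω)
    simp only [Set.mem_iUnion]
    exact ⟨d, Finset.mem_Ico.2 ⟨hd1, by exact_mod_cast hlt⟩, hdq⟩
  · -- `d̂_T > d*` forces `T̂_{T,d*} ≤ q`, an event whose probability tends to `0` or to `α`.
    have hle : ∀ T, P {ω | (dstar : ℕ∞) <
          sInf {m : ℕ∞ | ∃ d : ℕ, m = (d : ℕ∞) ∧ 1 ≤ d ∧ q < That T d ω}} ≤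
        P {ω | That T dstar ω ≤ q} := by
      refine fun T => measure_mono fun ω hω => ?_
      by_contra hq
      rw [Set.mem_ofPred_eq] at hω hq
      exact hω.not_ge (sInf_le ⟨dstar, rfl, hdstar, not_le.1 hq⟩)
    refine (limsup_le_limsup (Eventually.of_forall hle)).trans ?_
    rcases hb with h | ⟨μ, _, hμq, hμα, h⟩
    · rw [(h q).limsup_eq]
      exact zero_le
    · rw [(h q hμq).limsup_eq, hμα]
end

section
/- Let (Ω, 𝒜, ℙ) be a probability space, d* ≥ 1 and d₀ ≥ 1 natural numbers, q ∈ ℝ, 0 < α < 1, and for each T ∈ ℕ and each natural number d ≥ 1 let T̂_{T,d} be a real random variable. Assume: (a) for every d with 1 ≤ d < d* and every C ∈ ℝ, ℙ(T̂_{T,d} > C) → 0 as T → ∞; (b) either for every C ∈ ℝ one has ℙ(T̂_{T,d*} ≤ C) → 0, or T̂_{T,d*} converges in distribution to a Borel probability measure μ on ℝ with μ({q}) = 0 and μ((−∞, q]) = α. Define d̂_T as the least d ≥ 1 with T̂_{T,d} > q, with d̂_T = +∞ if no such d exists. Consider the test that rejects the null hypothesis H₀ : d* ≤ d₀ whenever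 d̂_T > d₀. Then this test has asymptotic level α and is consistent: if d* ≤ d₀ then limsup_{T→∞} ℙ(d̂_T > d₀) ≤ α, and if d* > d₀ then ℙ(d̂_T > d₀) → 1 as T → ∞. -/
open MeasureTheory Filter Topology

/-!
The test rejects exactly when none of the statistics with index `1 ≤ d ≤ d₀` exceeds `q`
(`lt_sInf_iff_forall_le`). If `d* ≤ d₀`, rejection forces `T̂_{T,d*} ≤ q`, an event whose
probability tends to `0` or to `α`. If `d₀ < d*`, non-rejection is contained in the finite union
over `1 ≤ d ≤ d₀` of the events `T̂_{T,d} > q`, each of vanishing probability. Since the statistics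
are not assumed measurable, the argument only uses monotonicity and subadditivity of `P`, so it is
valid for the outer measure.
-/

/-- The least index `d ≥ 1` with `q < x d` (infinite if there is none) exceeds `d₀` if and only if
no index in `[1, d₀]` satisfies `q < x d`. -/
lemma lt_sInf_iff_forall_le (d₀ : ℕ) (q : ℝ) (x : ℕ → ℝ) :
    (d₀ : ℕ∞) < sInf {m : ℕ∞ | ∃ d : ℕ, m = (d : ℕ∞) ∧ 1 ≤ d ∧ q < x d} ↔
      ∀ d, 1 ≤ d → d ≤ d₀ → x d ≤ q := by
  constructor
  · intro h d h1 h2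
    by_contra! hq
    have h3 := h.trans_le (sInf_le ⟨d, rfl, h1, hq⟩)
    rw [Nat.cast_lt] at h3
    omega
  · intro h
    -- The infimum may be infinite, so the strict bound is obtained from the lower bound `d₀ + 1`.
    have hlt : (d₀ : ℕ∞) < ((d₀ + 1 : ℕ) : ℕ∞) := Nat.cast_lt.2 (Nat.lt_succ_self d₀)
    refine hlt.trans_le (le_sInf ?_)
    rintro m ⟨d, rfl, h1, hq⟩
    rw [Nat.cast_le]
    by_contra! hd
    exact absurd (h d h1 (by omega)) (not_le.2 hq)

/-- Theorem 4.4 of the paper: the test that rejects `H₀ : d* ≤ d₀` whenever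
`d̂_T > d₀` (where `d̂_T = min {d ≥ 1 : T̂_{T,d} > q}`, `= ∞` if no such `d` exists)
has asymptotic level `α` and is consistent. -/
theorem complexity_test_level_and_consistency
    {Ω : Type*} [MeasurableSpace Ω] (P : Measure Ω) [IsProbabilityMeasure P]
    (dstar d₀ : ℕ) (hdstar : 1 ≤ dstar) (hd₀ : 1 ≤ d₀)
    (q α : ℝ) (hα0 : 0 < α) (hα1 : α < 1)
    (That : ℕ → ℕ → Ω → ℝ)
    (ha : ∀ d : ℕ, 1 ≤ d → d < dstar → ∀ C : ℝ,
      Tendsto (fun T => P {ω | C < That T d ω}) atTop (𝓝 0))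
    (hb : (∀ C : ℝ, Tendsto (fun T => P {ω | That T dstar ω ≤ C}) atTop (𝓝 0)) ∨
      (∃ μ : Measure ℝ, IsProbabilityMeasure μ ∧ μ {q} = 0 ∧
        μ (Set.Iic q) = ENNReal.ofReal α ∧
        ∀ t : ℝ, μ {t} = 0 →
          Tendsto (fun T => P {ω | That T dstar ω ≤ t}) atTop (𝓝 (μ (Set.Iic t))))) :
    (dstar ≤ d₀ →
      Filter.limsup
        (fun T => P {ω |
          (d₀ : ℕ∞) < sInf {m : ℕ∞ | ∃ d : ℕ, m = (d : ℕ∞) ∧ 1 ≤ d ∧ q < That T d ω}})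
        atTop ≤ ENNReal.ofReal α) ∧
    (d₀ < dstar →
      Tendsto
        (fun T => P {ω |
          (d₀ : ℕ∞) < sInf {m : ℕ∞ | ∃ d : ℕ, m = (d : ℕ∞) ∧ 1 ≤ d ∧ q < That T d ω}})
        atTop (𝓝 1)) := by
  simp only [fun T ω => lt_sInf_iff_forall_le d₀ q (fun d => That T d ω)]
  constructor
  · intro hle
    have hmono : ∀ T, P {ω | ∀ d, 1 ≤ d → d ≤ d₀ → That T d ω ≤ q} ≤
        P {ω | That T dstar ω ≤ q} :=
      fun T => measure_mono fun ω h => h dstar hdstar hle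
    refine (limsup_le_limsup (Eventually.of_forall hmono)).trans ?_
    rcases hb with hb | ⟨μ, -, hq, hμ, hb⟩
    · rw [(hb q).limsup_eq]
      exact zero_le
    · rw [(hb q hq).limsup_eq, hμ]
  · intro hlt
    have hsum : Tendsto (fun T => ∑ d ∈ Finset.Icc 1 d₀, P {ω | q < That T d ω}) atTop (𝓝 0) := by
      have h := tendsto_finsetSum (Finset.Icc 1 d₀) fun d hd =>
        ha d (Finset.mem_Icc.1 hd).1 ((Finset.mem_Icc.1 hd).2.trans_lt hlt) q
      simpa using h
    have hlow : Tendsto (fun T => 1 - ∑ d ∈ Finset.Icc 1 d₀, P {ω | q < That T d ω})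
        atTop (𝓝 1) := by
      simpa using ENNReal.Tendsto.sub tendsto_const_nhds hsum (Or.inl ENNReal.one_ne_top)
    refine tendsto_of_tendsto_of_tendsto_of_le_of_le hlow tendsto_const_nhds ?_
      (fun T => prob_le_one)
    intro T
    -- Rejection and the finitely many exceedance events cover `Ω`.
    have hcover : (Set.univ : Set Ω) ⊆ {ω | ∀ d, 1 ≤ d → d ≤ d₀ → That T d ω ≤ q} ∪
        ⋃ d ∈ Finset.Icc 1 d₀, {ω | q < That T d ω} := by
      intro ω _
      by_cases h : ∀ d, 1 ≤ d → d ≤ d₀ → That T d ω ≤ q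
      · exact Or.inl h
      · push Not at h
        obtain ⟨d, h1, h2, h3⟩ := h
        exact Or.inr (Set.mem_biUnion (Finset.mem_Icc.2 ⟨h1, h2⟩) h3)
    rw [tsub_le_iff_right]
    calc (1 : ENNReal) = P Set.univ := measure_univ.symm
      _ ≤ _ := measure_mono hcover
      _ ≤ _ := measure_union_le _ _
      _ ≤ _ := by gcongr; exact measure_biUnion_finset_le _ _
end

section
/- Let H be a complex Hilbert space and let B, B̂ : H → H be bounded self-adjoint operators. Let λ, λ̂ ∈ ℝ and let φ, φ̂ ∈ H be unit vectors with B φ = λ φ and B̂ φ̂ = λ̂ φ̂. Let P := φ ⊗ φ and P̂ := φ̂ ⊗ φ̂ be the corresponding rank-one orthogonal projections, v ↦ ⟪φ, v⟫ φ and v ↦ ⟪φ̂, v⟫ φ̂. Then the exact perturbation identity λ̂ − λ = ⟪φ, (B̂ − B) φ⟫ + ⟪φ, ((B̂ − B) − (λ̂ − λ)·Id)((P̂ − P) φ)⟫ holds, where Id is the identity operator on H. -/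
open scoped ComplexInnerProductSpace

/-- Proposition D.1 of the paper for a simple eigenvalue: the exact
eigenvalue-perturbation identity
`λ̂ − λ = ⟪φ, (B̂−B)φ⟫ + ⟪φ, ((B̂−B) − (λ̂−λ)·Id)((P̂−P)φ)⟫` for unit eigenvectors
`φ, φ̂` of the bounded self-adjoint operators `B, B̂` with eigenvalues `λ, λ̂`, where
`P = φ⊗φ` and `P̂ = φ̂⊗φ̂` are the rank-one eigenprojections. -/
theorem eigenvalue_perturbation_identity
    {H : Type*} [NormedAddCommGroup H] [InnerProductSpace ℂ H] [CompleteSpace H]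
    (B Bh : H →L[ℂ] H) (hB : IsSelfAdjoint B) (hBh : IsSelfAdjoint Bh)
    (lam lamh : ℝ) (φ φh : H) (hφ : ‖φ‖ = 1) (hφh : ‖φh‖ = 1)
    (heig : B φ = (lam : ℂ) • φ) (heigh : Bh φh = (lamh : ℂ) • φh) :
    ((lamh : ℂ) - (lam : ℂ)) =
      ⟪φ, (Bh - B) φ⟫ +
        ⟪φ, (Bh - B) (⟪φh, φ⟫ • φh - ⟪φ, φ⟫ • φ)
            - ((lamh : ℂ) - (lam : ℂ)) • (⟪φh, φ⟫ • φh - ⟪φ, φ⟫ • φ)⟫ := by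
  -- Self-adjointness of `B` moves it onto its eigenvector `φ`, so `B` also acts as `lam` in the
  -- pairing of `φ` with `φh`; the quadratic terms `⟪φ, (Bh - B) φ⟫` then cancel.
  have hcross : ⟪φ, B φh⟫ = (lam : ℂ) * ⟪φ, φh⟫ := by
    have hsymm : ⟪B φ, φh⟫ = ⟪φ, B φh⟫ := hB.isSymmetric φ φh
    rw [← hsymm, heig, inner_smul_left, Complex.conj_ofReal]
  have hunit : ⟪φ, φ⟫ = (1 : ℂ) := by
    rw [inner_self_eq_norm_sq_to_K, hφ]
    norm_num
  simp only [sub_apply, map_sub, map_smul, inner_sub_right,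
    inner_smul_right, heigh, hcross, hunit, heig]
  ring
end
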